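/- Let K(Φ) be the time-stepping matrix associated with real m×m matrices Φ_1, …, Φ_N, and let 0 = m_0 < m_1 < ⋯ < m_n = N be coarse indices with interface set Γ = {m_0, …, m_n} and interior set I = {0, …, N} ∖ Γ. Then the interior principal block submatrix K^{II} of K(Φ) is invertible, and the Schur complement K^{ΓΓ} − K^{ΓI} (K^{II})⁻¹ K^{IΓ}, with the indices of Γ ordered increasingly, equals the coarse time-stepping matrix K(Ψ) with (n+1)×(n+1) blocks, where Ψ_i = Φ_{m_i} Φ_{m_i−1} ⋯ Φ_{m_{i−1}+1} for i = 1, …, n. -/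

import Mathlib

open Matrix

/-- The global-in-time time-stepping matrix `K(Φ)`: diagonal blocks are the `m × m`
identity, subdiagonal blocks (block row `i`, block column `i-1`, `i = 1, …, N`) are `-Φ i`,
remaining blocks are zero. Only `Φ 1, …, Φ N` are used. -/
def timeSteppingMatrix (m N : ℕ) (Φ : ℕ → Matrix (Fin m) (Fin m) ℝ) :
    Matrix (Fin (N + 1) × Fin m) (Fin (N + 1) × Fin m) ℝ :=
  fun p q =>
    if p.1 = q.1 then (if p.2 = q.2 then 1 else 0)
    else if (p.1 : ℕ) = (q.1 : ℕ) + 1 then -(Φ (p.1 : ℕ) p.2 q.2) else 0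

/-- `prodPhi m Φ j i = Φ i * Φ (i-1) * ⋯ * Φ (j+1)`, empty product (`i ≤ j`) is the
identity. -/
def prodPhi (m : ℕ) (Φ : ℕ → Matrix (Fin m) (Fin m) ℝ) (j i : ℕ) :
    Matrix (Fin m) (Fin m) ℝ :=
  (((List.range' (j + 1) (i - j)).reverse).map Φ).prod

/-- The interior block indices: time steps of the level-0 partition that are not coarse
(interface) indices. -/
abbrev InteriorIdx (N n : ℕ) (mIdx : Fin (n + 1) → Fin (N + 1)) : Type :=
  {i : Fin (N + 1) // i ∉ Finset.image mIdx Finset.univ}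

lemma prodPhi_self (m : ℕ) (Φ : ℕ → Matrix (Fin m) (Fin m) ℝ) (j : ℕ) :
    prodPhi m Φ j j = 1 := by
  simp [prodPhi]

lemma prodPhi_succ (m : ℕ) (Φ : ℕ → Matrix (Fin m) (Fin m) ℝ) (j i : ℕ) (h : j ≤ i) :
    prodPhi m Φ j (i + 1) = Φ (i + 1) * prodPhi m Φ j i := by
  unfold prodPhi
  have h1 : i + 1 - j = (i - j) + 1 := by omega
  rw [h1, List.range'_concat]
  have h2 : j + 1 + 1 * (i - j) = i + 1 := by omega
  rw [h2]
  simp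

lemma tsm_row_zero (m N : ℕ) (Φ : ℕ → Matrix (Fin m) (Fin m) ℝ)
    (W : Fin (N + 1) × Fin m → ℝ) (i : Fin (N + 1)) (a : Fin m) (hi : (i : ℕ) = 0) :
    ∑ q, timeSteppingMatrix m N Φ (i, a) q * W q = W (i, a) := by
  rw [Finset.sum_eq_single (i, a)]
  · simp [timeSteppingMatrix]
  · rintro ⟨k, c⟩ - hne
    simp only [timeSteppingMatrix]
    split_ifs with h1 h2 h3
    · exact absurd (by rw [h1, h2]) hne
    · simp
    · omega
    · simp
  · simp

lemma tsm_row_succ (m N : ℕ) (Φ : ℕ → Matrix (Fin m) (Fin m) ℝ)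
    (W : Fin (N + 1) × Fin m → ℝ) (i k : Fin (N + 1)) (a : Fin m)
    (hi : (i : ℕ) = k + 1) :
    ∑ q, timeSteppingMatrix m N Φ (i, a) q * W q
      = W (i, a) - ∑ c, Φ i a c * W (k, c) := by
  have hne : i ≠ k := by
    intro h
    rw [h] at hi
    omega
  rw [Fintype.sum_prod_type, Fintype.sum_eq_add i k hne]
  · rw [sub_eq_add_neg, ← Finset.sum_neg_distrib]
    congr 1
    · simp [timeSteppingMatrix]
    · apply Finset.sum_congr rfl
      intro c _
      simp [timeSteppingMatrix, hne, hi]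
  · rintro x ⟨h1, h2⟩
    apply Finset.sum_eq_zero
    intro c _
    have h3 : ¬ (i : ℕ) = x + 1 := by
      intro h
      apply h2
      apply Fin.ext
      omega
    simp [timeSteppingMatrix, h1.symm, h3]

/-- The extension (prolongation) matrix from interface values to all time steps. -/
noncomputable def extMat (m N n : ℕ) (Φ : ℕ → Matrix (Fin m) (Fin m) ℝ)
    (mIdx : Fin (n + 1) → Fin (N + 1)) :
    Matrix (Fin (N + 1) × Fin m) (Fin (n + 1) × Fin m) ℝ :=
  fun p q => open Classical in
    if mIdx q.1 ≤ p.1 ∧ ∀ l, mIdx l ≤ p.1 → l ≤ q.1 then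
      prodPhi m Φ (mIdx q.1) p.1 p.2 q.2 else 0

lemma extMat_interface (m N n : ℕ) (Φ : ℕ → Matrix (Fin m) (Fin m) ℝ)
    (mIdx : Fin (n + 1) → Fin (N + 1)) (hmono : StrictMono mIdx)
    (l : Fin (n + 1)) (a : Fin m) (q : Fin (n + 1) × Fin m) :
    extMat m N n Φ mIdx (mIdx l, a) q = if (l, a) = q then 1 else 0 := by
  obtain ⟨j, b⟩ := q
  simp only [extMat, hmono.le_iff_le, Prod.mk.injEq]
  by_cases h : l = j
  · subst h
    simp [prodPhi_self, Matrix.one_apply]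
  · have : ¬ (j ≤ l ∧ ∀ l_1, l_1 ≤ l → l_1 ≤ j) := by
      rintro ⟨h1, h2⟩
      exact h (le_antisymm (h2 l le_rfl) h1)
    simp [h, this]

lemma sum_split (m N n : ℕ) (mIdx : Fin (n + 1) → Fin (N + 1)) (hmono : StrictMono mIdx)
    (f : Fin (N + 1) × Fin m → ℝ) :
    ∑ q, f q = ∑ q : Fin (n + 1) × Fin m, f (mIdx q.1, q.2)
      + ∑ q : InteriorIdx N n mIdx × Fin m, f (q.1.1, q.2) := by
  simp only [Fintype.sum_prod_type]
  have h := Finset.sum_add_sum_compl (Finset.image mIdx Finset.univ) (fun x => ∑ y, f (x, y))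
  rw [← h, Finset.sum_image (fun x _ y _ h => hmono.injective h)]
  congr 1
  exact Finset.sum_subtype _ (by simp) _

lemma submatrix_ext (m N n : ℕ) (Φ : ℕ → Matrix (Fin m) (Fin m) ℝ)
    (mIdx : Fin (n + 1) → Fin (N + 1)) (hmono : StrictMono mIdx)
    {α : Type} (f : α → Fin (N + 1) × Fin m) :
    (timeSteppingMatrix m N Φ).submatrix f
        (fun p : Fin (n + 1) × Fin m => (mIdx p.1, p.2)) +
      (timeSteppingMatrix m N Φ).submatrix f
          (fun p : InteriorIdx N n mIdx × Fin m => (p.1.1, p.2)) *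
        (extMat m N n Φ mIdx).submatrix
          (fun p : InteriorIdx N n mIdx × Fin m => (p.1.1, p.2)) id
      = (timeSteppingMatrix m N Φ * extMat m N n Φ mIdx).submatrix f id := by
  ext p q
  simp only [Matrix.add_apply, Matrix.submatrix_apply, Matrix.mul_apply, id]
  rw [sum_split m N n mIdx hmono
    (fun x => timeSteppingMatrix m N Φ (f p) x * extMat m N n Φ mIdx x q)]
  congr 1
  simp only [extMat_interface m N n Φ mIdx hmono]
  simp

lemma isUnit_interior (m N n : ℕ) (Φ : ℕ → Matrix (Fin m) (Fin m) ℝ)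
    (mIdx : Fin (n + 1) → Fin (N + 1)) :
    IsUnit ((timeSteppingMatrix m N Φ).submatrix
        (fun p : InteriorIdx N n mIdx × Fin m => (p.1.1, p.2))
        (fun p : InteriorIdx N n mIdx × Fin m => (p.1.1, p.2))) := by
  rw [← Matrix.mulVec_injective_iff_isUnit]
  set A := (timeSteppingMatrix m N Φ).submatrix
        (fun p : InteriorIdx N n mIdx × Fin m => (p.1.1, p.2))
        (fun p : InteriorIdx N n mIdx × Fin m => (p.1.1, p.2)) with hA
  intro v w hvw
  have key : ∀ k : ℕ, ∀ p : InteriorIdx N n mIdx × Fin m, (p.1.1 : ℕ) = k → (v - w) p = 0 := by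
    intro k
    induction k using Nat.strong_induction_on with
    | _ k ih =>
      intro p hp
      have h1 : (A *ᵥ (v - w)) p = 0 := by
        have hvw' : A *ᵥ v = A *ᵥ w := hvw
        rw [Matrix.mulVec_sub, hvw', sub_self]
        rfl
      rw [Matrix.mulVec, dotProduct, Finset.sum_eq_single p] at h1
      · simpa [hA, timeSteppingMatrix] using h1
      · intro q _ hq
        by_cases hlt : (q.1.1 : ℕ) < k
        · rw [ih _ hlt q rfl, mul_zero]
        · have : A p q = 0 := by
            simp only [hA, Matrix.submatrix_apply, timeSteppingMatrix]
            split_ifs with h2 h3 h4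
            · exact absurd (Prod.ext (Subtype.ext h2.symm) h3.symm) hq
            · rfl
            · omega
            · rfl
          rw [this, zero_mul]
      · simp
  funext p
  have := key _ p rfl
  rw [Pi.sub_apply] at this
  linarith

lemma mul_ext_interior (m N n : ℕ) (Φ : ℕ → Matrix (Fin m) (Fin m) ℝ)
    (mIdx : Fin (n + 1) → Fin (N + 1)) (h0 : mIdx 0 = 0)
    (i : Fin (N + 1)) (hi : ∀ l, mIdx l ≠ i) (a : Fin m) (q : Fin (n + 1) × Fin m) :
    (timeSteppingMatrix m N Φ * extMat m N n Φ mIdx) (i, a) q = 0 := by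
  have hpos : (i : ℕ) ≠ 0 := by
    intro h
    apply hi 0
    rw [h0]
    exact Fin.ext h.symm
  obtain ⟨k, hk⟩ : ∃ k : Fin (N + 1), (i : ℕ) = k + 1 :=
    ⟨⟨i - 1, by omega⟩, by simp only []; omega⟩
  rw [Matrix.mul_apply, tsm_row_succ m N Φ (fun x => extMat m N n Φ mIdx x q) i k a hk]
  have hiff : ∀ l, mIdx l ≤ i ↔ mIdx l ≤ k := by
    intro l
    have h1 : (mIdx l : ℕ) ≠ i := fun h => hi l (Fin.ext h)
    rw [Fin.le_def, Fin.le_def]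
    omega
  simp only [extMat, hiff]
  split_ifs with h
  · rw [hk, prodPhi_succ _ _ _ _ h.1, Matrix.mul_apply, sub_self]
  · simp

lemma mul_ext_interface (m N n : ℕ) (Φ : ℕ → Matrix (Fin m) (Fin m) ℝ)
    (mIdx : Fin (n + 1) → Fin (N + 1)) (hmono : StrictMono mIdx) (h0 : mIdx 0 = 0)
    (Ψ : ℕ → Matrix (Fin m) (Fin m) ℝ)
    (hΨ : ∀ i, 1 ≤ i → ∀ h2 : i ≤ n,
      Ψ i = prodPhi m Φ (mIdx ⟨i - 1, by omega⟩).val (mIdx ⟨i, by omega⟩).val)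
    (l : Fin (n + 1)) (a : Fin m) (q : Fin (n + 1) × Fin m) :
    (timeSteppingMatrix m N Φ * extMat m N n Φ mIdx) (mIdx l, a) q
      = timeSteppingMatrix m n Ψ (l, a) q := by
  obtain ⟨j, b⟩ := q
  rw [Matrix.mul_apply]
  by_cases hl : (l : ℕ) = 0
  · have hl' : l = 0 := Fin.ext hl
    rw [tsm_row_zero m N Φ (fun x => extMat m N n Φ mIdx x (j, b)) _ a (by rw [hl', h0]; rfl),
      extMat_interface m N n Φ mIdx hmono]
    have : ¬ (l : ℕ) = (j : ℕ) + 1 := by omega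
    simp only [timeSteppingMatrix, this, if_false, Prod.mk.injEq]
    split_ifs <;> simp_all
  · obtain ⟨l', hl'⟩ : ∃ l' : Fin (n + 1), (l : ℕ) = l' + 1 :=
      ⟨⟨l - 1, by omega⟩, by simp only []; omega⟩
    have hlt : mIdx l' < mIdx l := hmono (by rw [Fin.lt_def]; omega)
    have hlt' : (mIdx l' : ℕ) < mIdx l := hlt
    obtain ⟨k, hk⟩ : ∃ k : Fin (N + 1), (mIdx l : ℕ) = k + 1 :=
      ⟨⟨mIdx l - 1, by omega⟩, by simp only []; omega⟩
    rw [tsm_row_succ m N Φ (fun x => extMat m N n Φ mIdx x (j, b)) _ k a hk]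
    simp only [extMat_interface m N n Φ mIdx hmono]
    have hiff : ∀ x, mIdx x ≤ k ↔ x ≤ l' := by
      intro x
      have h1 : mIdx x ≤ k ↔ mIdx x < mIdx l := by
        rw [Fin.le_def, Fin.lt_def]
        omega
      rw [h1, hmono.lt_iff_lt, Fin.lt_def, Fin.le_def]
      omega
    by_cases hj : j = l'
    · subst hj
      have hne : l ≠ j := by
        intro h
        rw [h] at hl'
        omega
      have hP := hΨ l (by omega) (by omega)
      have e1 : (⟨(l : ℕ) - 1, by omega⟩ : Fin (n + 1)) = j := Fin.ext (by simp only []; omega)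
      rw [e1] at hP
      have hle : (mIdx j : ℕ) ≤ k := by omega
      simp only [Fin.eta, hk, prodPhi_succ _ _ _ _ hle] at hP
      simp only [timeSteppingMatrix, hne, Prod.mk.injEq, false_and, if_false, extMat, hiff]
      rw [if_pos hl', hP, Matrix.mul_apply]
      simp [hk]
    · have hno : ¬ (j ≤ l' ∧ ∀ x, x ≤ l' → x ≤ j) := by
        rintro ⟨h1, h2⟩
        exact hj (le_antisymm h1 (h2 l' le_rfl))
      have hno2 : ¬ (l : ℕ) = (j : ℕ) + 1 := by
        intro h
        exact hj (Fin.ext (by omega))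
      simp only [timeSteppingMatrix, extMat, hiff, hno, hno2, if_false, Prod.mk.injEq]
      split_ifs <;> simp_all

/-- Let `K(Φ)` be the time-stepping matrix of `Φ 1, …, Φ N` and
`0 = mIdx 0 < mIdx 1 < ⋯ < mIdx n = N` coarse indices, with interface set
`Γ = {mIdx 0, …, mIdx n}` and interior set `I` its complement. Then the interior block
`K^{II}` is invertible, and the Schur complement `K^{ΓΓ} - K^{ΓI} (K^{II})⁻¹ K^{IΓ}`
(with `Γ` ordered increasingly) equals the coarse time-stepping matrix `K(Ψ)` whose
propagators are `Ψ i = Φ (mIdx i) * ⋯ * Φ (mIdx (i-1) + 1)` for `i = 1, …, n`. -/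
theorem schurComplement_of_timeSteppingMatrix (m N n : ℕ)
    (hm : 0 < m) (hN : 0 < N) (hn : 0 < n)
    (Φ : ℕ → Matrix (Fin m) (Fin m) ℝ)
    (mIdx : Fin (n + 1) → Fin (N + 1)) (hmono : StrictMono mIdx)
    (h0 : mIdx 0 = 0) (hlast : mIdx (Fin.last n) = Fin.last N)
    (Ψ : ℕ → Matrix (Fin m) (Fin m) ℝ)
    (hΨ : ∀ i, 1 ≤ i → ∀ h2 : i ≤ n,
      Ψ i = prodPhi m Φ (mIdx ⟨i - 1, by omega⟩).val (mIdx ⟨i, by omega⟩).val) :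
    IsUnit ((timeSteppingMatrix m N Φ).submatrix
        (fun p : InteriorIdx N n mIdx × Fin m => (p.1.1, p.2))
        (fun p : InteriorIdx N n mIdx × Fin m => (p.1.1, p.2))) ∧
    (timeSteppingMatrix m N Φ).submatrix
        (fun p : Fin (n + 1) × Fin m => (mIdx p.1, p.2))
        (fun p : Fin (n + 1) × Fin m => (mIdx p.1, p.2)) -
      (timeSteppingMatrix m N Φ).submatrix
          (fun p : Fin (n + 1) × Fin m => (mIdx p.1, p.2))
          (fun p : InteriorIdx N n mIdx × Fin m => (p.1.1, p.2)) *
        ((timeSteppingMatrix m N Φ).submatrix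
          (fun p : InteriorIdx N n mIdx × Fin m => (p.1.1, p.2))
          (fun p : InteriorIdx N n mIdx × Fin m => (p.1.1, p.2)))⁻¹ *
        (timeSteppingMatrix m N Φ).submatrix
          (fun p : InteriorIdx N n mIdx × Fin m => (p.1.1, p.2))
          (fun p : Fin (n + 1) × Fin m => (mIdx p.1, p.2)) =
    timeSteppingMatrix m n Ψ := by
  refine ⟨isUnit_interior m N n Φ mIdx, ?_⟩
  have hU := isUnit_interior m N n Φ mIdx
  have h1 := submatrix_ext m N n Φ mIdx hmono
    (fun p : InteriorIdx N n mIdx × Fin m => (p.1.1, p.2))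
  have h2 := submatrix_ext m N n Φ mIdx hmono
    (fun p : Fin (n + 1) × Fin m => (mIdx p.1, p.2))
  have z1 : (timeSteppingMatrix m N Φ * extMat m N n Φ mIdx).submatrix
      (fun p : InteriorIdx N n mIdx × Fin m => (p.1.1, p.2)) id = 0 := by
    ext p q
    refine mul_ext_interior m N n Φ mIdx h0 p.1.1 ?_ p.2 q
    intro l hl
    exact p.1.2 (Finset.mem_image.mpr ⟨l, Finset.mem_univ _, hl⟩)
  have z2 : (timeSteppingMatrix m N Φ * extMat m N n Φ mIdx).submatrix
      (fun p : Fin (n + 1) × Fin m => (mIdx p.1, p.2)) id = timeSteppingMatrix m n Ψ := by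
    ext p q
    exact mul_ext_interface m N n Φ mIdx hmono h0 Ψ hΨ p.1 p.2 q
  rw [z1] at h1
  rw [z2] at h2
  rw [← h2, Matrix.mul_assoc, eq_neg_of_add_eq_zero_left h1, Matrix.mul_neg,
    Matrix.nonsing_inv_mul_cancel_left _ _ ((Matrix.isUnit_iff_isUnit_det _).mp hU),
    Matrix.mul_neg, sub_neg_eq_add]
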